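/- Let G be a finite simple graph, let d ≥ 1, and let v be a vertex of G of degree at most d. If the induced subgraph of G on V(G) ∖ {v} is generically d-stress free, then G is generically d-stress free. -/

import Mathlib

open scoped Classical

/-- `H` is a minor of `G`: there is a family of pairwise disjoint nonempty connected
"branch sets" in `G`, one for each vertex of `H`, such that every edge of `H` is
realized by an edge of `G` between the corresponding branch sets. -/
def HasMinor {V W : Type*} (G : SimpleGraph V) (H : SimpleGraph W) : Prop :=
  ∃ B : W → Set V,
    (∀ i, (B i).Nonempty) ∧
    (∀ i j, i ≠ j → Disjoint (B i) (B j)) ∧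
    (∀ i, (G.induce (B i)).Connected) ∧
    (∀ i j, H.Adj i j → ∃ x ∈ B i, ∃ y ∈ B j, G.Adj x y)

/-- `w : E(G) → ℝ` is a stress of the embedding `f : V → ℝ^d`. -/
noncomputable def IsStress {V : Type*} [Fintype V] (G : SimpleGraph V) (d : ℕ)
    (f : V → EuclideanSpace ℝ (Fin d)) (w : G.edgeSet → ℝ) : Prop :=
  ∀ v : V,
    (∑ u : V, if h : G.Adj v u then w ⟨s(v, u), G.mem_edgeSet.mpr h⟩ • (f v - f u) else 0) = 0

/-- The set of `d`-embeddings of `G` whose only stress is the zero function. -/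
def StressFreeEmbeddings {V : Type*} [Fintype V] (G : SimpleGraph V) (d : ℕ) :
    Set (V → EuclideanSpace ℝ (Fin d)) :=
  {f | ∀ w : G.edgeSet → ℝ, IsStress G d f w → w = 0}

/-- `G` is generically `d`-stress free: the set of `d`-embeddings with no nonzero
stress is open and dense in the space of all `d`-embeddings. -/
def GenericallyStressFree {V : Type*} [Fintype V] (G : SimpleGraph V) (d : ℕ) : Prop :=
  IsOpen (StressFreeEmbeddings G d) ∧ Dense (StressFreeEmbeddings G d)

/-!
The stresses of `f` form the kernel of a linear map depending continuously on `f`, so stress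
freeness, being injectivity of this map, is an open condition on `f`.

For density, note that at `v` a stress is a linear relation among the at most `d` vectors
`f v - f u`, with `u` a neighbor of `v`. Where these are linearly independent, every stress vanishes
on the edges at `v` and is thus a stress of `G - v`. Linear independence is dense: if `y` is a
linearly independent tuple, then `x + t • y` is linearly dependent only if `-t` is an eigenvalue of
an endomorphism determined by `x` and `y`. It remains to intersect this dense set of maps with the
dense open set of those whose restriction to `G - v` is stress free.
-/

section LinearIndependent

variable {ι K E : Type*} [AddCommGroup E]

theorem finite_setOfPred_not_linearIndependent_add_smul [Finite ι] [Field K] [Module K E]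
    (x : ι → E) {y : ι → E} (hy : LinearIndependent K y) :
    {t : K | ¬ LinearIndependent K (x + t • y)}.Finite := by
  have := Fintype.ofFinite ι
  obtain ⟨φ, hφ⟩ := (Fintype.linearCombination K y).exists_leftInverse_of_injective
    (LinearMap.ker_eq_bot.mpr hy.fintypeLinearCombination_injective)
  -- A relation `∑ i, c i • (x i + t • y i) = 0` makes `c` an eigenvector of `A` for `-t`.
  let A : Module.End K (ι → K) := φ ∘ₗ Fintype.linearCombination K x
  refine (A.finite_hasEigenvalue.preimage neg_injective.injOn).subset fun t ht => ?_
  obtain ⟨c, hc, i, hi⟩ := Fintype.not_linearIndependent_iff.mp ht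
  have hφy : φ (∑ i, c i • y i) = c := LinearMap.congr_fun hφ c
  have hAc : A c + t • c = 0 :=
    calc A c + t • c = φ (∑ i, c i • x i) + t • φ (∑ i, c i • y i) := by rw [hφy]; rfl
      _ = φ (∑ i, c i • (x + t • y) i) := by
        simp only [Pi.add_apply, Pi.smul_apply, smul_add, Finset.sum_add_distrib, map_add,
          smul_comm _ t, ← Finset.smul_sum, map_smul]
      _ = 0 := by rw [hc, map_zero]
  refine Module.End.hasEigenvalue_of_hasEigenvector (x := c) ⟨?_, fun h => hi (congrFun h i)⟩
  rw [Module.End.mem_eigenspace_iff, neg_smul]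
  exact eq_neg_of_add_eq_zero_left hAc

variable [NontriviallyNormedField K] [Module K E]

theorem dense_setOfPred_linearIndependent_map [Finite ι] {F : Type*} [AddCommGroup F] [Module K F]
    [TopologicalSpace F] [ContinuousAdd F] [ContinuousSMul K F] (L : F →ₗ[K] ι → E) {g : F}
    (hg : LinearIndependent K (L g)) :
    Dense {f : F | LinearIndependent K (L f)} := by
  intro f
  have hdense : Dense {t : K | LinearIndependent K (L f + t • L g)} := by
    simpa only [Set.sdiff_eq, Set.univ_inter, Set.compl_ofPred, not_not] using
      dense_univ.sdiff_finite (finite_setOfPred_not_linearIndependent_add_smul (L f) hg)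
  have hline : Continuous fun t : K => f + t • g := by fun_prop
  have hf : f ∈ closure ((fun t : K => f + t • g) '' {t | LinearIndependent K (L f + t • L g)}) :=
    hline.range_subset_closure_image_dense hdense ⟨0, by simp⟩
  refine closure_mono ?_ hf
  rintro _ ⟨t, ht, rfl⟩
  simpa using ht

theorem dense_setOfPred_linearIndependent_sub {V : Type*} [TopologicalSpace E] [ContinuousAdd E]
    [ContinuousSMul K E] {s : Finset V} {v : V} (hv : v ∉ s)
    (hs : s.card ≤ Module.finrank K E) :
    Dense {f : V → E | LinearIndependent K fun u : s => f v - f u} := by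
  obtain ⟨b, hb⟩ := exists_linearIndependent_of_le_finrank hs
  let g : V → E := Function.extend Subtype.val (-b ∘ s.equivFin) 0
  have hg : b ∘ s.equivFin = fun u : s => g v - g u := by
    funext u
    have hgv : g v = 0 := Function.extend_apply' _ _ _ (by simpa using hv)
    have hgu : g u = -b (s.equivFin u) := Subtype.val_injective.extend_apply _ _ u
    simp only [hgv, hgu, zero_sub, neg_neg, Function.comp_apply]
  let L : (V → E) →ₗ[K] s → E :=
    LinearMap.pi fun u => .proj (φ := fun _ => E) v - .proj (u : V)
  have hLg : LinearIndependent K (L g) := by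
    change LinearIndependent K fun u : s => g v - g u
    exact hg ▸ hb.comp _ s.equivFin.injective
  exact dense_setOfPred_linearIndependent_map L hLg

end LinearIndependent

theorem isOpenMap_domRestrict {ι : Type*} {X : ι → Type*} [∀ i, TopologicalSpace (X i)]
    (s : Set ι) : IsOpenMap (s.domRestrict : (∀ i, X i) → ∀ i : s, X i) :=
  isOpenMap_fst.comp (Homeomorph.piEquivPiSubtypeProd (· ∈ s) X).isOpenMap

section StressMap

variable {V E : Type*} [Fintype V] [AddCommGroup E] [Module ℝ E]

/-- The linear map sending edge weights `w` to the vector `∑ u, w(v, u) • (f v - f u)` at each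
vertex `v`, whose kernel is the space of stresses of `f`. It is the transpose of the rigidity
matrix of `(G, f)`. -/
noncomputable def stressMap (G : SimpleGraph V) (f : V → E) : (G.edgeSet → ℝ) →ₗ[ℝ] V → E :=
  LinearMap.pi fun v => ∑ u, if h : G.Adj v u then
    (LinearMap.proj (⟨s(v, u), h⟩ : G.edgeSet)).smulRight (f v - f u) else 0

theorem stressMap_apply (G : SimpleGraph V) (f : V → E) (w : G.edgeSet → ℝ) (v : V) :
    stressMap G f w v = ∑ u, if h : G.Adj v u then w ⟨s(v, u), h⟩ • (f v - f u) else 0 := by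
  simp only [stressMap, LinearMap.pi_apply, LinearMap.sum_apply]
  refine Finset.sum_congr rfl fun u _ => ?_
  split_ifs <;> rfl

theorem continuous_stressMap [TopologicalSpace E] [IsTopologicalAddGroup E] [ContinuousSMul ℝ E]
    (G : SimpleGraph V) (w : G.edgeSet → ℝ) : Continuous fun f : V → E => stressMap G f w := by
  refine continuous_pi fun v => ?_
  simp only [stressMap_apply]
  refine continuous_finsetSum _ fun u _ => ?_
  split_ifs <;> fun_prop

end StressMap

section Stress

variable {V : Type*} [Fintype V] {G : SimpleGraph V} {d : ℕ}
  {f : V → EuclideanSpace ℝ (Fin d)} {w : G.edgeSet → ℝ}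

theorem isStress_iff_stressMap_eq_zero : IsStress G d f w ↔ stressMap G f w = 0 := by
  simp only [IsStress, funext_iff, stressMap_apply, Pi.zero_apply]

theorem mem_stressFreeEmbeddings_iff_injective :
    f ∈ StressFreeEmbeddings G d ↔ Function.Injective (stressMap G f) := by
  simp only [StressFreeEmbeddings, Set.mem_ofPred_eq, isStress_iff_stressMap_eq_zero,
    injective_iff_map_eq_zero]

theorem isOpen_stressFreeEmbeddings (G : SimpleGraph V) (d : ℕ) :
    IsOpen (StressFreeEmbeddings G d) := by
  have hcont : Continuous fun f : V → EuclideanSpace ℝ (Fin d) =>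
      LinearMap.toContinuousLinearMap (stressMap G f) :=
    continuous_clm_apply.mpr (continuous_stressMap G)
  convert ContinuousLinearMap.isOpen_injective.preimage hcont
  ext f
  exact mem_stressFreeEmbeddings_iff_injective

theorem IsStress.eq_zero_of_linearIndependent (hw : IsStress G d f w) {v : V}
    [Fintype (G.neighborSet v)]
    (hv : LinearIndependent ℝ fun u : G.neighborFinset v => f v - f u)
    {e : G.edgeSet} (he : v ∈ (e : Sym2 V)) : w e = 0 := by
  have hsum : ∑ u : G.neighborFinset v,
      w ⟨s(v, u), (G.mem_neighborFinset v u).mp u.2⟩ • (f v - f u) = 0 := by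
    rw [← hw v, Finset.univ_eq_attach, Finset.sum_attach_eq_sum_dite]
    simp only [SimpleGraph.mem_neighborFinset]
  obtain ⟨e, hadj⟩ := e
  obtain ⟨u, rfl⟩ := he
  exact Fintype.linearIndependent_iff.mp hv _ hsum ⟨u, (G.mem_neighborFinset v u).mpr hadj⟩

theorem IsStress.comp_mapEdgeSet_induce (hw : IsStress G d f w) {s : Set V} [Fintype s]
    (hs : ∀ e : G.edgeSet, ∀ v ∈ (e : Sym2 V), v ∉ s → w e = 0) :
    IsStress (G.induce s) d (s.domRestrict f)
      (w ∘ (SimpleGraph.Embedding.induce s).mapEdgeSet) := by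
  intro v
  refine Eq.trans ?_ (hw v)
  rw [← Finset.sum_subset s.toFinset.subset_univ, ← Finset.sum_set_coe]
  · rfl
  · intro u _ hu
    split_ifs with h
    · rw [hs ⟨s(v, u), h⟩ u (Sym2.mem_mk_right _ _) (by simpa using hu), zero_smul]
    · rfl

theorem mem_stressFreeEmbeddings_of_domRestrict [∀ v, Fintype (G.neighborSet v)] {s : Set V}
    [Fintype s] (hf : s.domRestrict f ∈ StressFreeEmbeddings (G.induce s) d)
    (hs : ∀ v ∉ s, LinearIndependent ℝ fun u : G.neighborFinset v => f v - f u) :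
    f ∈ StressFreeEmbeddings G d := by
  intro w hw
  have hstar (e : G.edgeSet) (v : V) (hve : v ∈ (e : Sym2 V)) (hv : v ∉ s) : w e = 0 :=
    hw.eq_zero_of_linearIndependent (hs v hv) hve
  have hinduce := hf _ (hw.comp_mapEdgeSet_induce hstar)
  ext ⟨e, he⟩
  induction e with | _ a b
  by_cases ha : a ∈ s
  · by_cases hb : b ∈ s
    · exact congrFun hinduce ⟨s(⟨a, ha⟩, ⟨b, hb⟩), he⟩
    · exact hstar _ b (Sym2.mem_mk_right a b) hb
  · exact hstar _ a (Sym2.mem_mk_left a b) ha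

end Stress

/-- Let `v` be a vertex of `G` of degree at most `d` (`d ≥ 1`). If the induced
subgraph of `G` on `V(G) ∖ {v}` is generically `d`-stress free, then so is `G`. -/
theorem genericallyStressFree_of_deleteVertex {V : Type*} [Fintype V] (G : SimpleGraph V)
    (d : ℕ) (hd : 1 ≤ d) (v : V) (hdeg : G.degree v ≤ d)
    (h : GenericallyStressFree (G.induce {x : V | x ≠ v}) d) :
    GenericallyStressFree G d := by
  refine ⟨isOpen_stressFreeEmbeddings G d, ?_⟩
  let S : Set (V → EuclideanSpace ℝ (Fin d)) :=
    {f | Set.domRestrict {x | x ≠ v} f ∈ StressFreeEmbeddings (G.induce {x : V | x ≠ v}) d}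
  have hSopen : IsOpen S := h.1.preimage (Pi.continuous_domRestrict _)
  have hSdense : Dense S := h.2.preimage (isOpenMap_domRestrict _)
  have hstar : Dense {f : V → EuclideanSpace ℝ (Fin d) |
      LinearIndependent ℝ fun u : G.neighborFinset v => f v - f u} :=
    dense_setOfPred_linearIndependent_sub (by simp) (by simpa using hdeg)
  refine (hSdense.inter_of_isOpen_left hstar hSopen).mono fun f hf => ?_
  refine mem_stressFreeEmbeddings_of_domRestrict hf.1 fun u hu => ?_
  obtain rfl : u = v := by simpa using hu
  exact hf.2
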